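/- arXiv:1602.01133 — 3 statements merged into one kernel-verified Lean document; each statement's English description precedes it below -/
import Mathlib

section
/- Every non-negative integer n can be written in the form a(2a-1) + b(2b-1) + c(2c+1) + d(2d+1) for some non-negative integers a, b, c, d. -/
/-!
Since `8 a (2 a - 1) + 1 = (4 a - 1) ^ 2` and `8 c (2 c + 1) + 1 = (4 c + 1) ^ 2`, we look for
`8 n + 4 = X ^ 2 + Y ^ 2 + Z ^ 2 + W ^ 2` with `X, Y ≡ -1`, `Z, W ≡ 1` modulo `4` and all of
`X, Y, Z, W` greater than `-3`. Euler's identity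
`4 (p² + q² + r² + t²) = (p + q + r + t)² + (p - q - r + t)² + (p + q - r - t)² + (p - q + r - t)²`
produces them from a representation of `2 n + 1` as a sum of four squares in which `p` dominates:
by Cauchy–Schwarz it is enough that `3 (q² + r² + t²) < (p + 3) ^ 2`. So `p` is taken to be about
`√(2 n + 1)`, with the parity of `n`, which meets that bound once `2 n + 1 ≥ 64`; then
`2 n + 1 - p²` is `1` or `2` modulo `4`, hence a sum of three squares.

For the three squares, let `d` be the odd part of `m ≡ 1, 2 (mod 4)` and `p` a prime with
`p ≡ 2 d - 1 (mod 8 d)`. Then `p ≡ 1 (mod 4)`, `m ∣ p + 1`, and `m` is a square modulo `p` because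
both `d` and `2` have Jacobi symbol `χ₄ d` over `p`. A pigeonhole argument solves
`t² m = x² + p y²`; as `p` is a sum of two squares, `m` is a sum of three rational squares, and the
Davenport–Cassels descent makes them integral.
-/

open ZMod
open scoped NumberTheorySymbols

section DavenportCassels

variable {M : Type*} [AddCommGroup M] {Q : QuadraticForm ℤ M}

/-- An integral quadratic form is Euclidean if every rational vector `x / t` differs from some
integral vector by a vector on which the form takes a value of absolute value less than `1`;
the condition is stated after multiplication by `t ^ 2`. -/
def IsEuclideanForm (Q : QuadraticForm ℤ M) : Prop :=
  ∀ t : ℤ, t ≠ 0 → ∀ x : M, ∃ y : M, |Q (x - t • y)| < t ^ 2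

/-- The second intersection of the line through `x / t` and `y` with the quadric `Q = m` is
`(A • x + B • y) / (A * t + B)`. -/
theorem map_smul_add_smul_eq_sq_mul {m t A B : ℤ} {x y : M} (h : Q x = t ^ 2 * m)
    (hA : A = Q y - m) (hB : B = 2 * (t * m) - QuadraticMap.polar Q x y) :
    Q (A • x + B • y) = (A * t + B) ^ 2 * m := by
  rw [QuadraticMap.map_add Q, Q.map_smul, Q.map_smul, QuadraticMap.polar_smul_left,
    QuadraticMap.polar_smul_right]
  simp only [smul_eq_mul]
  linear_combination A ^ 2 * h - B ^ 2 * hA + A * B * hB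

theorem map_sub_smul_eq_mul {m t : ℤ} {x y : M} (h : Q x = t ^ 2 * m) :
    Q (x - t • y) = t * ((Q y - m) * t + (2 * (t * m) - QuadraticMap.polar Q x y)) := by
  rw [sub_eq_add_neg, QuadraticMap.map_add Q, QuadraticMap.polar_neg_right,
    QuadraticMap.polar_smul_right, Q.map_neg, Q.map_smul]
  simp only [smul_eq_mul]
  linear_combination h

theorem IsEuclideanForm.exists_map_eq_of_map_eq_sq_mul (hQ : IsEuclideanForm Q)
    (hani : Q.Anisotropic) {m t : ℤ} (ht : t ≠ 0) {x : M} (h : Q x = t ^ 2 * m) :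
    ∃ y, Q y = m := by
  induction hk : t.natAbs using Nat.strong_induction_on generalizing t x with
  | _ k ih =>
    subst hk
    obtain ⟨y, hy⟩ := hQ t ht x
    have hfactor := map_sub_smul_eq_mul (y := y) h
    have hdescent := map_smul_add_smul_eq_sq_mul (y := y) h rfl rfl
    set t' := (Q y - m) * t + (2 * (t * m) - QuadraticMap.polar Q x y)
    obtain ht' | ht' := eq_or_ne t' 0
    · have hx : x = t • y := sub_eq_zero.1 (hani _ (by rw [hfactor, ht', mul_zero]))
      refine ⟨y, mul_left_cancel₀ (pow_ne_zero 2 ht) ?_⟩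
      rw [← h, hx, Q.map_smul, smul_eq_mul, sq]
    · have hlt : |t'| < |t| := by
        rw [hfactor, abs_mul, ← sq_abs, sq] at hy
        exact lt_of_mul_lt_mul_left hy (abs_nonneg t)
      exact ih t'.natAbs (Int.natAbs_lt_iff_sq_lt.2 (sq_lt_sq.2 hlt)) ht' hdescent rfl

end DavenportCassels

section SumOfSquares

variable {ι : Type*} [Fintype ι]

/-- The quadratic form `∑ i, v i ^ 2` on `ι → ℤ`. -/
def sumSq (ι : Type*) [Fintype ι] : QuadraticForm ℤ (ι → ℤ) :=
  QuadraticMap.weightedSumSquares ℤ fun _ : ι => (1 : ℤ)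

theorem sumSq_apply (v : ι → ℤ) : sumSq ι v = ∑ i, v i ^ 2 := by
  simp only [sumSq, QuadraticMap.weightedSumSquares_apply, one_smul, sq]

theorem anisotropic_sumSq : (sumSq ι).Anisotropic := by
  intro v hv
  rw [sumSq_apply, Finset.sum_eq_zero_iff_of_nonneg fun i _ => sq_nonneg (v i)] at hv
  exact funext fun i => pow_eq_zero_iff two_ne_zero |>.1 (hv i (Finset.mem_univ i))

theorem exists_two_mul_abs_sub_mul_le {t : ℤ} (ht : t ≠ 0) (x : ℤ) :
    ∃ y : ℤ, 2 * |x - t * y| ≤ |t| := by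
  have hpos : 0 < t.natAbs := Int.natAbs_pos.2 ht
  have hlower := Int.le_bmod (x := x) hpos
  have hupper := Int.bmod_lt (x := x) hpos
  refine ⟨t.sign * x.bdiv t.natAbs, ?_⟩
  rw [← mul_assoc, Int.mul_sign_self, ← Int.bmod_eq_self_sub_mul_bdiv]
  grind

theorem isEuclideanForm_sumSq (hι : Fintype.card ι < 4) : IsEuclideanForm (sumSq ι) := by
  intro t ht x
  choose y hy using fun i => exists_two_mul_abs_sub_mul_le ht (x i)
  refine ⟨y, ?_⟩
  have hbound (i : ι) : 4 * (x i - t * y i) ^ 2 ≤ t ^ 2 := by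
    have := pow_le_pow_left₀ (by positivity) (hy i) 2
    rwa [mul_pow, sq_abs, sq_abs] at this
  have hsum : 4 * ∑ i, (x i - t * y i) ^ 2 ≤ Fintype.card ι * t ^ 2 := by
    rw [Finset.mul_sum, ← nsmul_eq_mul]
    exact Finset.sum_le_card_nsmul _ _ _ fun i _ => hbound i
  have hcard : (Fintype.card ι : ℤ) * t ^ 2 < 4 * t ^ 2 :=
    mul_lt_mul_of_pos_right (by exact_mod_cast hι) (by positivity)
  simp only [sumSq_apply, Pi.sub_apply, Pi.smul_apply, smul_eq_mul]
  rw [abs_of_nonneg (Finset.sum_nonneg fun i _ => sq_nonneg _)]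
  linarith

end SumOfSquares

section Pigeonhole

variable {ι G : Type*} [Fintype ι] [AddGroup G] [Finite G]

theorem exists_ne_zero_map_eq_zero_abs_le (φ : (ι → ℤ) →+ G) (b : ι → ℕ)
    (hb : Nat.card G < ∏ i, (b i + 1)) : ∃ v ≠ 0, φ v = 0 ∧ ∀ i, |v i| ≤ b i := by
  classical
  have := Fintype.ofFinite G
  let box := Fintype.piFinset fun i => Finset.Icc (0 : ℤ) (b i)
  have hcard : (Finset.univ : Finset G).card < box.card := by
    simpa [box, Fintype.card_piFinset, ← Nat.card_eq_fintype_card] using hb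
  obtain ⟨v, hv, w, hw, hne, heq⟩ :=
    Finset.exists_ne_map_eq_of_card_lt_of_maps_to hcard (f := φ) (by simp)
  refine ⟨v - w, sub_ne_zero.2 hne, by rw [map_sub, heq, sub_self], fun i => ?_⟩
  simp only [box, Fintype.mem_piFinset, Finset.mem_Icc] at hv hw
  exact abs_sub_le_of_nonneg_of_le (hv i).1 (hv i).2 (hw i).1 (hw i).2

theorem exists_ne_zero_map_eq_zero_sq_le [Nonempty ι] (φ : (ι → ℤ) →+ G) (N : ι → ℕ)
    (hN : Nat.card G ^ 2 ≤ ∏ i, N i) : ∃ v ≠ 0, φ v = 0 ∧ ∀ i, v i ^ 2 ≤ N i := by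
  have hlt : Nat.card G < ∏ i, ((N i).sqrt + 1) := by
    refine lt_of_pow_lt_pow_left₀ 2 (Nat.zero_le _) (hN.trans_lt ?_)
    rw [← Finset.prod_pow]
    obtain hzero | hpos := (∏ i, N i).eq_zero_or_pos
    · rw [hzero]
      positivity
    · exact Finset.prod_lt_prod_of_nonempty
        (fun i hi => Nat.pos_of_ne_zero (Finset.prod_ne_zero_iff.1 hpos.ne' i hi))
        (fun i _ => Nat.lt_succ_sqrt' (N i)) Finset.univ_nonempty
  obtain ⟨v, hv, hφ, hbound⟩ := exists_ne_zero_map_eq_zero_abs_le φ (fun i => (N i).sqrt) hlt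
  refine ⟨v, hv, hφ, fun i => ?_⟩
  calc v i ^ 2 = |v i| ^ 2 := (sq_abs _).symm
    _ ≤ ((N i).sqrt : ℤ) ^ 2 := by gcongr; exact hbound i
    _ ≤ N i := by exact_mod_cast Nat.sqrt_le' (N i)

end Pigeonhole

section Legendre

variable {m p : ℕ}

theorem exists_small_dvd_sq_add_mul_sq_sub_mul_sq [NeZero m] [NeZero p] (hmp : m.Coprime p)
    (hm : IsSquare (m : ZMod p)) (hp : IsSquare (-p : ZMod m)) :
    ∃ z u w : ℤ, (z ≠ 0 ∨ u ≠ 0 ∨ w ≠ 0) ∧ (m * p : ℤ) ∣ z ^ 2 + p * u ^ 2 - m * w ^ 2 ∧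
      z ^ 2 ≤ m * p ∧ u ^ 2 ≤ m ∧ w ^ 2 ≤ p := by
  obtain ⟨r, hr⟩ := hm
  obtain ⟨s, hs⟩ := hp
  let φ : (Fin 3 → ℤ) →+ ZMod m × ZMod p :=
    AddMonoidHom.mk' (fun v => (v 0 - s * v 1, v 0 - r * v 2)) fun v w => by
      ext <;> simp only [Pi.add_apply, Int.cast_add, Prod.mk_add_mk] <;> ring
  obtain ⟨v, hv, hφ, hbound⟩ := exists_ne_zero_map_eq_zero_sq_le φ ![m * p, m, p] (by
    rw [Nat.card_prod, Nat.card_zmod, Nat.card_zmod, Fin.prod_univ_three]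
    exact le_of_eq (by simp; ring))
  obtain ⟨hvm, hvp⟩ : v 0 - s * v 1 = 0 ∧ v 0 - r * v 2 = 0 := by
    simpa only [φ, AddMonoidHom.mk'_apply, Prod.mk_eq_zero] using hφ
  refine ⟨v 0, v 1, v 2, ?_, ?_, by simpa using hbound 0, by simpa using hbound 1,
    by simpa using hbound 2⟩
  · by_contra! h
    exact hv (funext fun i => by fin_cases i <;> simp [h])
  · refine (Nat.isCoprime_iff_coprime.2 hmp).mul_dvd ?_ ?_
    · rw [← ZMod.intCast_zmod_eq_zero_iff_dvd]
      push_cast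
      rw [ZMod.natCast_self]
      linear_combination (v 0 + s * v 1 : ZMod m) * hvm - (v 1 : ZMod m) ^ 2 * hs
    · rw [← ZMod.intCast_zmod_eq_zero_iff_dvd]
      push_cast
      rw [ZMod.natCast_self]
      linear_combination (v 0 + r * v 2 : ZMod p) * hvp - (v 2 : ZMod p) ^ 2 * hr

theorem exists_sq_add_mul_sq_eq_sq_mul (hmp : m.Coprime p) (hp0 : ¬ IsSquare p)
    (hm : IsSquare (m : ZMod p)) (hp : IsSquare (-p : ZMod m)) :
    ∃ t x y : ℤ, t ≠ 0 ∧ x ^ 2 + p * y ^ 2 = t ^ 2 * m := by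
  have : NeZero p := ⟨by rintro rfl; exact hp0 (IsSquare.zero)⟩
  have : NeZero m := ⟨by rintro rfl; exact hp0 (by simp_all)⟩
  have hm_pos : (0 : ℤ) < m := by exact_mod_cast NeZero.pos m
  have hp_pos : (0 : ℤ) < p := by exact_mod_cast NeZero.pos p
  have hmp_pos : (0 : ℤ) < m * p := mul_pos hm_pos hp_pos
  obtain ⟨z, u, w, hne, ⟨k, hk⟩, hz, hu, hw⟩ :=
    exists_small_dvd_sq_add_mul_sq_sub_mul_sq hmp hm hp
  have hpu : (p : ℤ) * u ^ 2 ≤ p * m := by gcongr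
  have hpu_nonneg : 0 ≤ (p : ℤ) * u ^ 2 := by positivity
  have hw' : w ^ 2 < p := hw.lt_of_ne fun h => hp0 ⟨w.natAbs, by zify; rw [← sq, sq_abs, h]⟩
  have hmw : (m : ℤ) * w ^ 2 < m * p := by gcongr
  have hmw_nonneg : 0 ≤ (m : ℤ) * w ^ 2 := by positivity
  have hk_lower : -1 < k := by nlinarith [sq_nonneg z]
  have hk_upper : k ≤ 2 := by nlinarith
  obtain rfl | rfl | rfl : k = 0 ∨ k = 1 ∨ k = 2 := by omega
  · refine ⟨w, z, u, ?_, by linarith⟩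
    rintro rfl
    have hz0 : z ^ 2 = 0 := by nlinarith [sq_nonneg z]
    have hu0 : (p : ℤ) * u ^ 2 = 0 := by nlinarith [sq_nonneg z]
    simp_all
  · -- Multiply `z ^ 2 + p * u ^ 2 = m * (w ^ 2 + p)` by `w ^ 2 + p`; norms from `ℤ[√-p]` compose.
    refine ⟨w ^ 2 + p, z * w - p * u, z + u * w, by positivity, ?_⟩
    linear_combination (w ^ 2 + p : ℤ) * hk
  · have hum : u ^ 2 = m := by nlinarith
    exact ⟨1, u, 0, one_ne_zero, by rw [hum]; ring⟩

end Legendre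

section ThreeSquares

theorem exists_eq_sum_three_sq_of_dvd_prime_add_one {m p : ℕ} (hp : p.Prime) (hp4 : p % 4 ≠ 3)
    (hdvd : m ∣ p + 1) (hm : J(m | p) = 1) :
    ∃ x y z : ℤ, (m : ℤ) = x ^ 2 + y ^ 2 + z ^ 2 := by
  have := Fact.mk hp
  have hmp : m.Coprime p := Nat.Coprime.coprime_dvd_left hdvd (by simp)
  have hneg : (-p : ZMod m) = 1 := by
    have : ((p + 1 : ℕ) : ZMod m) = 0 := (ZMod.natCast_eq_zero_iff _ _).2 hdvd
    push_cast at this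
    linear_combination -this
  obtain ⟨t, x, y, ht, h⟩ := exists_sq_add_mul_sq_eq_sq_mul hmp hp.prime.not_isSquare
    (by simpa using ZMod.isSquare_of_jacobiSym_eq_one hm) (hneg ▸ IsSquare.one)
  obtain ⟨a, b, hab⟩ := Nat.Prime.sq_add_sq hp4
  have hrat : sumSq (Fin 3) ![x, a * y, b * y] = t ^ 2 * m := by
    rw [sumSq_apply, Fin.sum_univ_three, ← h, ← hab]
    simp
    ring
  obtain ⟨v, hv⟩ := (isEuclideanForm_sumSq (by simp)).exists_map_eq_of_map_eq_sq_mul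
    anisotropic_sumSq ht hrat
  exact ⟨v 0, v 1, v 2, by rw [← hv, sumSq_apply, Fin.sum_univ_three]⟩

theorem jacobiSym_eq_χ₄_of_dvd_add_one {d p : ℕ} (hd : Odd d) (hp : p % 4 = 1)
    (hdvd : d ∣ p + 1) : J(d | p) = χ₄ d := by
  have hmod : (p : ℤ) ≡ -1 [ZMOD d] := by
    refine (Int.modEq_iff_dvd.2 ?_).symm
    simpa using Int.natCast_dvd_natCast.2 hdvd
  rw [jacobiSym.quadratic_reciprocity_one_mod_four' hd hp, jacobiSym.mod_left' hmod,
    jacobiSym.at_neg_one hd]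

theorem jacobiSym_two_eq_χ₄_of_add_one_modEq {d p : ℕ} (hd : Odd d)
    (h : p + 1 ≡ 2 * d [MOD 8]) : J(2 | p) = χ₄ d := by
  rw [Nat.odd_iff] at hd
  rw [Nat.ModEq] at h
  rw [jacobiSym.at_two (Nat.odd_iff.2 (by omega)), χ₈_nat_eq_if_mod_eight, χ₄_nat_eq_if_mod_four]
  split_ifs <;> first | rfl | omega

theorem exists_prime_add_one_modEq_two_mul {d : ℕ} (hd : Odd d) :
    ∃ p : ℕ, p.Prime ∧ p + 1 ≡ 2 * d [MOD 8 * d] := by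
  obtain ⟨j, rfl⟩ := hd
  have hcop : IsCoprime (2 * (2 * j + 1) - 1 : ℤ) ((8 * (2 * j + 1) : ℕ) : ℤ) :=
    ⟨2 * (2 * j + 1) - 1, -j, by push_cast; ring⟩
  obtain ⟨p, -, hp, hmod⟩ := Nat.forall_exists_prime_gt_and_zmodEq 0 (by omega) hcop
  refine ⟨p, hp, Int.natCast_modEq_iff.1 ?_⟩
  simpa using hmod.add_right 1

theorem exists_eq_sum_three_sq {m : ℕ} (hm : m % 4 = 1 ∨ m % 4 = 2) :
    ∃ x y z : ℤ, (m : ℤ) = x ^ 2 + y ^ 2 + z ^ 2 := by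
  obtain ⟨d, hd, hmd⟩ : ∃ d, Odd d ∧ (m = d ∧ d % 4 = 1 ∨ m = 2 * d) := by
    rcases hm with hm | hm
    · exact ⟨m, Nat.odd_iff.2 (by omega), .inl ⟨rfl, hm⟩⟩
    · exact ⟨m / 2, Nat.odd_iff.2 (by omega), .inr (by omega)⟩
  obtain ⟨p, hp, hmod⟩ := exists_prime_add_one_modEq_two_mul hd
  have hmod8 : p + 1 ≡ 2 * d [MOD 8] := hmod.of_mul_right d
  have hp4 : p % 4 = 1 := by
    rw [Nat.odd_iff] at hd
    rw [Nat.ModEq] at hmod8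
    omega
  have hdvd : 2 * d ∣ p + 1 :=
    (hmod.dvd_iff (mul_dvd_mul_right (by norm_num) d)).2 dvd_rfl
  have hJ : J(d | p) = χ₄ d := jacobiSym_eq_χ₄_of_dvd_add_one hd hp4 (dvd_of_mul_left_dvd hdvd)
  rcases hmd with ⟨rfl, hd4⟩ | rfl
  · exact exists_eq_sum_three_sq_of_dvd_prime_add_one hp (by omega) (dvd_of_mul_left_dvd hdvd)
      (hJ.trans (χ₄_nat_one_mod_four hd4))
  · refine exists_eq_sum_three_sq_of_dvd_prime_add_one hp (by omega) hdvd ?_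
    rw [Nat.cast_mul, jacobiSym.mul_left, hJ, Nat.cast_two,
      jacobiSym_two_eq_χ₄_of_add_one_modEq hd hmod8]
    rcases Nat.odd_mod_four_iff.1 (Nat.odd_iff.1 hd) with hd4 | hd4
    · simp [χ₄_nat_one_mod_four hd4]
    · simp [χ₄_nat_three_mod_four hd4]

end ThreeSquares

section Hexagonal

theorem exists_eight_mul_hexagonal_add_one_eq_sq {X : ℤ} (hX : X ≡ -1 [ZMOD 4])
    (hlow : -5 < X) : ∃ a : ℕ, 8 * ((a * (2 * a - 1) : ℕ) : ℤ) + 1 = X ^ 2 := by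
  obtain ⟨k, hk⟩ := hX.symm.dvd
  lift k to ℕ using by omega
  obtain rfl : X = 4 * k - 1 := by linarith
  refine ⟨k, ?_⟩
  cases k with
  | zero => simp
  | succ k =>
    rw [show 2 * (k + 1) - 1 = 2 * k + 1 by omega]
    push_cast
    ring

theorem exists_eight_mul_second_hexagonal_add_one_eq_sq {X : ℤ} (hX : X ≡ 1 [ZMOD 4])
    (hlow : -3 < X) : ∃ c : ℕ, 8 * ((c * (2 * c + 1) : ℕ) : ℤ) + 1 = X ^ 2 := by
  obtain ⟨k, hk⟩ := hX.symm.dvd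
  lift k to ℕ using by omega
  obtain rfl : X = 4 * k + 1 := by linarith
  exact ⟨k, by push_cast; ring⟩

theorem abs_add_abs_add_abs_lt_of_three_mul_lt_sq {R : Type*} [CommRing R] [LinearOrder R]
    [IsStrictOrderedRing R] {q r t s : R} (hs : 0 ≤ s)
    (h : 3 * (q ^ 2 + r ^ 2 + t ^ 2) < s ^ 2) : |q| + |r| + |t| < s := by
  refine lt_of_pow_lt_pow_left₀ 2 hs (lt_of_le_of_lt ?_ h)
  simpa [Fin.sum_univ_three] using
    sq_sum_le_card_mul_sum_sq (s := Finset.univ) (f := ![|q|, |r|, |t|])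

theorem exists_eq_sum_hexagonal_of_sum_four_sq {n : ℕ} {p q r t : ℤ}
    (h : 2 * (n : ℤ) + 1 = p ^ 2 + (q ^ 2 + r ^ 2 + t ^ 2)) (hpq : p ≡ q [ZMOD 2])
    (hpr : p ≡ r [ZMOD 2]) (hsum : p + q + r + t ≡ -1 [ZMOD 4])
    (hlarge : |q| + |r| + |t| < p + 3) :
    ∃ a b c d : ℕ,
      n = a * (2 * a - 1) + b * (2 * b - 1) + c * (2 * c + 1) + d * (2 * d + 1) := by
  have hq := abs_le.1 (le_refl |q|)
  have hr := abs_le.1 (le_refl |r|)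
  have ht := abs_le.1 (le_refl |t|)
  rw [Int.ModEq] at hpq hpr hsum
  obtain ⟨a, ha⟩ := exists_eight_mul_hexagonal_add_one_eq_sq (X := p + q + r + t)
    (by rw [Int.ModEq]; omega) (by omega)
  obtain ⟨b, hb⟩ := exists_eight_mul_hexagonal_add_one_eq_sq (X := p - q - r + t)
    (by rw [Int.ModEq]; omega) (by omega)
  obtain ⟨c, hc⟩ := exists_eight_mul_second_hexagonal_add_one_eq_sq (X := p + q - r - t)
    (by rw [Int.ModEq]; omega) (by omega)
  obtain ⟨d, hd⟩ := exists_eight_mul_second_hexagonal_add_one_eq_sq (X := p - q + r - t)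
    (by rw [Int.ModEq]; omega) (by omega)
  refine ⟨a, b, c, d, Int.natCast_inj.1 ?_⟩
  push_cast only [Nat.cast_add]
  linarith

theorem sq_emod_four_eq_emod_two (x : ℤ) : x ^ 2 % 4 = x % 2 := by
  obtain hx | hx := Int.even_or_odd x
  · obtain ⟨k, rfl⟩ := hx.two_dvd
    rw [mul_pow]
    omega
  · rw [Int.sq_mod_four_eq_one_of_odd hx, Int.odd_iff.1 hx]

theorem exists_sum_three_sq_eq_and_modEq {p x y z : ℤ}
    (h : x ^ 2 + y ^ 2 + z ^ 2 ≡ p ^ 2 + 1 [ZMOD 4]) :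
    ∃ q r t : ℤ, x ^ 2 + y ^ 2 + z ^ 2 = q ^ 2 + r ^ 2 + t ^ 2 ∧
      p ≡ q [ZMOD 2] ∧ p ≡ r [ZMOD 2] ∧ p ≡ t + 1 [ZMOD 2] := by
  have hp := sq_emod_four_eq_emod_two p
  have hx := sq_emod_four_eq_emod_two x
  have hy := sq_emod_four_eq_emod_two y
  have hz := sq_emod_four_eq_emod_two z
  simp only [Int.ModEq] at h ⊢
  have hcases : p % 2 = y % 2 ∧ p % 2 = z % 2 ∧ p % 2 = (x + 1) % 2 ∨
      p % 2 = x % 2 ∧ p % 2 = z % 2 ∧ p % 2 = (y + 1) % 2 ∨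
      p % 2 = x % 2 ∧ p % 2 = y % 2 ∧ p % 2 = (z + 1) % 2 := by
    omega
  rcases hcases with hparity | hparity | hparity
  · exact ⟨y, z, x, by ring, hparity⟩
  · exact ⟨x, z, y, by ring, hparity⟩
  · exact ⟨x, y, z, rfl, hparity⟩

theorem exists_sq_eq_sq_and_add_modEq_neg_one {p q r t : ℤ} (hpq : p ≡ q [ZMOD 2])
    (hpr : p ≡ r [ZMOD 2]) (hpt : p ≡ t + 1 [ZMOD 2]) :
    ∃ q' t' : ℤ, q' ^ 2 = q ^ 2 ∧ t' ^ 2 = t ^ 2 ∧ p ≡ q' [ZMOD 2] ∧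
      p + q' + r + t' ≡ -1 [ZMOD 4] := by
  simp only [Int.ModEq] at hpq hpr hpt ⊢
  by_cases h : (p + q + r + t) % 4 = -1 % 4
  · exact ⟨q, t, rfl, rfl, hpq, h⟩
  obtain hp | hp := Int.emod_two_eq_zero_or_one p
  · exact ⟨q, -t, rfl, neg_sq t, hpq, by omega⟩
  · exact ⟨-q, t, neg_sq q, rfl, by omega, by omega⟩

theorem exists_modEq_two_and_sq_le_and_three_mul_lt {N : ℕ} (hN : 64 ≤ N) (k : ℕ) :
    ∃ p : ℕ, p ≡ k [MOD 2] ∧ p ^ 2 ≤ N ∧ 3 * (N - p ^ 2) < (p + 3) ^ 2 := by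
  have hle := Nat.sqrt_le' N
  have hlt : N < (N.sqrt + 1) ^ 2 := Nat.lt_succ_sqrt' N
  have hge : 8 ≤ N.sqrt := Nat.le_sqrt'.2 hN
  obtain ⟨s, hs⟩ : ∃ s, N.sqrt = s + 1 := ⟨N.sqrt - 1, by omega⟩
  rw [hs] at hle hlt hge
  by_cases hparity : (s + 1) % 2 = k % 2
  · refine ⟨s + 1, hparity, hle, ?_⟩
    zify [hle] at hlt ⊢
    nlinarith
  · have hle' : s ^ 2 ≤ N := (Nat.pow_le_pow_left s.le_succ 2).trans hle
    refine ⟨s, by rw [Nat.ModEq]; omega, hle', ?_⟩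
    zify [hle'] at hlt hge ⊢
    nlinarith

theorem exists_sum_four_sq_of_le {n : ℕ} (hn : 32 ≤ n) :
    ∃ p q r t : ℤ, 0 ≤ p ∧ 3 * (q ^ 2 + r ^ 2 + t ^ 2) < (p + 3) ^ 2 ∧
      2 * (n : ℤ) + 1 = p ^ 2 + (q ^ 2 + r ^ 2 + t ^ 2) ∧
      p ≡ q [ZMOD 2] ∧ p ≡ r [ZMOD 2] ∧ p + q + r + t ≡ -1 [ZMOD 4] := by
  obtain ⟨p, hpn, hle, hlarge⟩ :=
    exists_modEq_two_and_sq_le_and_three_mul_lt (N := 2 * n + 1) (by omega) n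
  have hp : (p : ℤ) ^ 2 % 4 = p % 2 := sq_emod_four_eq_emod_two p
  zify [hle] at hlarge
  rw [Nat.ModEq] at hpn
  obtain ⟨x, y, z, hxyz⟩ := exists_eq_sum_three_sq (m := 2 * n + 1 - p ^ 2) (by zify [hle]; omega)
  push_cast [Nat.cast_sub hle] at hxyz
  obtain ⟨q, r, t, hsum, hpq, hpr, hpt⟩ :=
    exists_sum_three_sq_eq_and_modEq (p := p) (x := x) (y := y) (z := z) (by
      rw [← hxyz, Int.ModEq]
      omega)
  obtain ⟨q', t', hq, ht, hpq', hmod⟩ := exists_sq_eq_sq_and_add_modEq_neg_one hpq hpr hpt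
  rw [← hq, ← ht] at hsum
  exact ⟨p, q', r, t', by positivity, by linarith, by linarith, hpq', hpr, hmod⟩

theorem exists_eq_sum_hexagonal_of_lt {n : ℕ} (hn : n < 32) :
    ∃ a b c d : ℕ,
      n = a * (2 * a - 1) + b * (2 * b - 1) + c * (2 * c + 1) + d * (2 * d + 1) := by
  have hsmall : ∀ n < 32, ∃ a < 5, ∃ b < 5, ∃ c < 4, ∃ d < 4,
      n = a * (2 * a - 1) + b * (2 * b - 1) + c * (2 * c + 1) + d * (2 * d + 1) := by
    decide +kernel
  obtain ⟨a, -, b, -, c, -, d, -, h⟩ := hsmall n hn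
  exact ⟨a, b, c, d, h⟩

end Hexagonal

theorem stmt_0 (n : ℕ) :
    ∃ a b c d : ℕ,
      n = a * (2 * a - 1) + b * (2 * b - 1) + c * (2 * c + 1) + d * (2 * d + 1) := by
  obtain hn | hn := lt_or_ge n 32
  · exact exists_eq_sum_hexagonal_of_lt hn
  obtain ⟨p, q, r, t, hp, hlarge, hsum, hpq, hpr, hmod⟩ := exists_sum_four_sq_of_le hn
  exact exists_eq_sum_hexagonal_of_sum_four_sq hsum hpq hpr hmod
    (abs_add_abs_add_abs_lt_of_three_mul_lt_sq (by linarith) hlarge)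
end

section
/- Every non-negative integer n can be written in the form 2a(2a-1) + b(2b-1) + 2c(2c+1) + d(2d+1) for some non-negative integers a, b, c, d. -/
/-!
Multiplying by `12` and completing squares, a representation of `n` comes from an identity
`12 * n + 9 - 8 * B ^ 2 = 4 * f ^ 2 + 6 * K ^ 2 + 3 * L ^ 2`, provided the left side is small
compared with `B ^ 2`, so that the inequalities needed for non-negativity follow from
Cauchy–Schwarz. The ternary form on the right represents every odd non-square `N ≡ 1 [MOD 3]`.
Indeed `2 * N` is a sum of three squares, whence `N = p ^ 2 + 2 * q ^ 2 + 4 * f ^ 2`; as `N` is not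
a square, `q` and `f` can be chosen not both divisible by `3`, and then `p ≡ ±q [ZMOD 3]` turns this
form into the required one. For large `n` there is a suitable `B` near `√(3 * n / 2)`: modulo `5`
one can force the left side to be a non-residue.

For a sum of three squares equal to `m ≡ 2 [MOD 4]`, Dirichlet's theorem and quadratic reciprocity
give a positive definite integral form `!![a, f, 1; f, p, 0; 1, 0, m]` of determinant `1`, which
represents `m`, and Hermite reduction shows that such a form is a sum of three squares.
-/

open Matrix

section ScaledSchurComplement

variable {R : Type*} [CommRing R] {n : ℕ}

/-- The Schur complement of the top-left entry of `A`, multiplied by that entry so that no division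
is needed. It carries the induction on the size of the matrix in Hermite reduction. -/
def scaledSchur (A : Matrix (Fin (n + 1)) (Fin (n + 1)) R) : Matrix (Fin n) (Fin n) R :=
  A 0 0 • A.submatrix Fin.succ Fin.succ - vecMulVec (fun i ↦ A i.succ 0) (fun j ↦ A 0 j.succ)

theorem apply_zero_mul_det_scaledSchur (A : Matrix (Fin (n + 1)) (Fin (n + 1)) R) :
    A 0 0 * (scaledSchur A).det = A 0 0 ^ n * A.det := by
  let scaled : Matrix (Fin (n + 1)) (Fin (n + 1)) R :=
    of fun i j ↦ vecCons 1 (fun _ ↦ A 0 0) i * A i j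
  let cleared : Matrix (Fin (n + 1)) (Fin (n + 1)) R :=
    of (vecCons (A 0) fun i j ↦ A 0 0 * A i.succ j - A i.succ 0 * A 0 j)
  have hscaled : scaled.det = A 0 0 ^ n * A.det := by
    simp [scaled, det_mul_column, Fin.prod_univ_succ]
  have hcleared : scaled.det = cleared.det := by
    refine det_eq_of_forall_row_eq_smul_add_const (vecCons 0 fun i ↦ A i.succ 0) 0 rfl ?_
    exact Fin.cases (by simp [scaled, cleared]) (by simp [scaled, cleared])
  have hminor : cleared.submatrix Fin.succ Fin.succ = scaledSchur A := by
    ext i j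
    simp [cleared, scaledSchur, vecMulVec_apply]
  rw [← hscaled, hcleared, det_succ_column_zero, Fin.sum_univ_succ, Fin.succAbove_zero, hminor]
  simp [cleared, mul_comm (A 0 0)]

theorem apply_zero_mul_dotProduct_mulVec_vecCons {A : Matrix (Fin (n + 1)) (Fin (n + 1)) R}
    (hA : A.IsSymm) (t : R) (x : Fin n → R) :
    A 0 0 * (vecCons t x ⬝ᵥ A *ᵥ vecCons t x) =
      x ⬝ᵥ scaledSchur A *ᵥ x + (A 0 0 * t + (fun j ↦ A 0 j.succ) ⬝ᵥ x) ^ 2 := by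
  have hcol : (fun i : Fin n ↦ A i.succ 0) = fun i ↦ A 0 i.succ :=
    funext fun i ↦ hA.apply 0 i.succ
  have hmul : A *ᵥ vecCons t x = vecCons (A 0 0 * t + (fun j ↦ A 0 j.succ) ⬝ᵥ x)
      (t • (fun j ↦ A 0 j.succ) + A.submatrix Fin.succ Fin.succ *ᵥ x) := by
    ext i
    refine Fin.cases ?_ (fun i ↦ ?_) i
    · simp [mulVec, dotProduct, Fin.sum_univ_succ]
    · simp [mulVec, dotProduct, Fin.sum_univ_succ, hA.apply 0 i.succ, mul_comm]
  rw [scaledSchur, hcol, hmul, cons_dotProduct_cons, sub_mulVec, smul_mulVec, vecMulVec_mulVec]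
  simp only [dotProduct_add, dotProduct_smul, dotProduct_sub, smul_eq_mul,
    MulOpposite.smul_eq_mul_unop, MulOpposite.unop_op, dotProduct_comm x (fun j ↦ A 0 j.succ)]
  ring

theorem posDef_scaledSchur [LinearOrder R] [IsStrictOrderedRing R] [StarRing R] [TrivialStar R]
    {A : Matrix (Fin (n + 1)) (Fin (n + 1)) R} (hA : A.PosDef) : (scaledSchur A).PosDef := by
  have hsymm : A.IsSymm := by simpa using hA.isHermitian
  have ha : 0 < A 0 0 := hA.diag_pos
  refine .of_dotProduct_mulVec_pos ?_ fun x hx ↦ ?_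
  · ext i j
    simp [scaledSchur, vecMulVec_apply, hsymm.apply _ _, mul_comm]
  let v := vecCons (-((fun j ↦ A 0 j.succ) ⬝ᵥ x)) (A 0 0 • x)
  have hv : v ≠ 0 := by simp [v, ha.ne', hx]
  have hval : A 0 0 * (v ⬝ᵥ A *ᵥ v) = A 0 0 ^ 2 * (x ⬝ᵥ scaledSchur A *ᵥ x) := by
    rw [apply_zero_mul_dotProduct_mulVec_vecCons hsymm]
    simp only [mulVec_smul, dotProduct_smul, smul_dotProduct, smul_eq_mul]
    ring
  have hpos : 0 < v ⬝ᵥ A *ᵥ v := by simpa using hA.dotProduct_mulVec_pos hv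
  rw [star_trivial]
  exact pos_of_mul_pos_right (hval ▸ mul_pos ha hpos) (sq_nonneg _)

end ScaledSchurComplement

section Hermite

variable {n : ℕ}

theorem transpose_mul_mul_self_apply_self {m R : Type*} [Fintype m] [NonUnitalSemiring R]
    (A S : Matrix m m R) (i : m) :
    (Sᵀ * A * S) i i = S.col i ⬝ᵥ A *ᵥ S.col i := by
  rw [Matrix.mul_assoc]
  rfl

theorem posDef_transpose_mul_mul_self {m R : Type*} [Fintype m] [DecidableEq m] [CommRing R]
    [PartialOrder R] [StarRing R] [TrivialStar R] {A : Matrix m m R} (hA : A.PosDef)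
    (S : SpecialLinearGroup m R) : (S.1ᵀ * A * S.1).PosDef := by
  have hinj : Function.Injective S.1.mulVec :=
    mulVec_injective_of_isUnit <| (isUnit_iff_isUnit_det _).2 (by simp)
  simpa using hA.conjTranspose_mul_mul_same hinj

theorem exists_specialLinearGroup_forall_apply_zero_le {A : Matrix (Fin (n + 1)) (Fin (n + 1)) ℤ}
    (hA : A.PosDef) :
    ∃ S : SpecialLinearGroup (Fin (n + 1)) ℤ, ∀ T : SpecialLinearGroup (Fin (n + 1)) ℤ,
      (S.1ᵀ * A * S.1) 0 0 ≤ (T.1ᵀ * A * T.1) 0 0 := by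
  let lead (T : SpecialLinearGroup (Fin (n + 1)) ℤ) : ℕ := ((T.1ᵀ * A * T.1) 0 0).toNat
  refine ⟨Function.argmin lead, fun T ↦ ?_⟩
  have hle : lead (Function.argmin lead) ≤ lead T := Function.argmin_le lead T
  have hpos (T) := (posDef_transpose_mul_mul_self hA T).diag_pos (i := 0)
  have := hpos T
  lia

theorem exists_specialLinearGroup_col_zero_eq_vecCons {R : Type*} [CommRing R] (t : R)
    (S : SpecialLinearGroup (Fin (n + 1)) R) :
    ∃ T : SpecialLinearGroup (Fin (n + 2)) R, T.1.col 0 = vecCons t (S.1.col 0) := by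
  let B : Matrix (Fin (n + 2)) (Fin (n + 2)) R :=
    of (vecCons (vecCons 1 0) fun i ↦ vecCons 0 (S.1 i))
  have hB : B.det = 1 := by
    rw [det_succ_column_zero, Fin.sum_univ_succ]
    have : B.submatrix Fin.succ Fin.succ = S.1 := by ext; simp [B]
    simp [B, this]
  let E : Matrix (Fin (n + 2)) (Fin (n + 2)) R := transvection 0 1 (t - 1) * transvection 1 0 1
  have hE : E.col 0 = vecCons t (Pi.single 0 1) := by
    rw [← mulVec_single_one, ← mulVec_mulVec]
    ext i
    refine Fin.cases ?_ (Fin.cases ?_ fun i ↦ ?_) i <;>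
      simp [transvection, add_mulVec, single_mulVec, Fin.ext_iff]
  refine ⟨⟨B * E, by simp [E, hB, det_mul]⟩, ?_⟩
  rw [← mulVec_single_one, ← mulVec_mulVec, mulVec_single_one, hE, ← mulVec_single_one S.1]
  simp only [B, cons_mulVec, cons_dotProduct_cons]
  ext i
  refine Fin.cases ?_ (fun i ↦ ?_) i <;> simp

theorem exists_two_mul_abs_add_mul_le {a : ℤ} (b : ℤ) (ha : 0 < a) :
    ∃ t, 2 * |b + a * t| ≤ a := by
  have := Int.emod_add_mul_ediv (2 * b + a) (2 * a)
  have := Int.emod_nonneg (2 * b + a) (by lia : 2 * a ≠ 0)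
  have := Int.emod_lt_of_pos (2 * b + a) (by lia : 0 < 2 * a)
  exact ⟨-((2 * b + a) / (2 * a)), by grind⟩

theorem three_mul_sq_apply_zero_le {A : Matrix (Fin (n + 2)) (Fin (n + 2)) ℤ} (hA : A.PosDef)
    (hmin : ∀ T : SpecialLinearGroup (Fin (n + 2)) ℤ, A 0 0 ≤ (T.1ᵀ * A * T.1) 0 0)
    (S : SpecialLinearGroup (Fin (n + 1)) ℤ) :
    3 * A 0 0 ^ 2 ≤ 4 * (S.1ᵀ * scaledSchur A * S.1) 0 0 := by
  have ha : 0 < A 0 0 := hA.diag_pos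
  have hsymm : A.IsSymm := by simpa using hA.isHermitian
  obtain ⟨t, ht⟩ := exists_two_mul_abs_add_mul_le ((fun j ↦ A 0 j.succ) ⬝ᵥ S.1.col 0) ha
  obtain ⟨T, hT⟩ := exists_specialLinearGroup_col_zero_eq_vecCons t S
  have hval := apply_zero_mul_dotProduct_mulVec_vecCons hsymm t (S.1.col 0)
  rw [← hT, ← transpose_mul_mul_self_apply_self, ← transpose_mul_mul_self_apply_self,
    add_comm (A 0 0 * t)] at hval
  have hsq : (2 * |(fun j ↦ A 0 j.succ) ⬝ᵥ S.1.col 0 + A 0 0 * t|) ^ 2 ≤ A 0 0 ^ 2 := by gcongr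
  rw [mul_pow, sq_abs] at hsq
  have hle : A 0 0 * A 0 0 ≤ A 0 0 * (T.1ᵀ * A * T.1) 0 0 := by gcongr; exact hmin T
  linarith

-- Hermite's `a ≤ (4 / 3) ^ (n / 2) * det A ^ (1 / (n + 1))`, with roots and denominators cleared.
theorem exists_specialLinearGroup_hermite_bound {A : Matrix (Fin (n + 1)) (Fin (n + 1)) ℤ}
    (hA : A.PosDef) : ∃ S : SpecialLinearGroup (Fin (n + 1)) ℤ,
    3 ^ (n + 1).choose 2 * (S.1ᵀ * A * S.1) 0 0 ^ (n + 1) ≤ 4 ^ (n + 1).choose 2 * A.det := by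
  induction n with
  | zero => exact ⟨1, by simp⟩
  | succ n ih =>
  obtain ⟨S, hS⟩ := exists_specialLinearGroup_forall_apply_zero_le hA
  refine ⟨S, ?_⟩
  have hdet : A.det = (S.1ᵀ * A * S.1).det := by simp
  rw [hdet]
  have hA' := posDef_transpose_mul_mul_self hA S
  have hmin (T : SpecialLinearGroup (Fin (n + 2)) ℤ) :
      (S.1ᵀ * A * S.1) 0 0 ≤ (T.1ᵀ * (S.1ᵀ * A * S.1) * T.1) 0 0 := by
    simpa [Matrix.mul_assoc] using hS (S * T)
  generalize S.1ᵀ * A * S.1 = A' at hA' hmin ⊢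
  set a := A' 0 0
  have ha0 : 0 < a := hA'.diag_pos
  obtain ⟨T, hT⟩ := ih (posDef_scaledSchur hA')
  have hT' := three_mul_sq_apply_zero_le hA' hmin T
  set g := (T.1ᵀ * scaledSchur A' * T.1) 0 0
  have hminor : (scaledSchur A').det = a ^ n * A'.det := by
    refine mul_left_cancel₀ ha0.ne' ?_
    rw [apply_zero_mul_det_scaledSchur]
    ring
  have hc : (n + 1 + 1).choose 2 = (n + 1) + (n + 1).choose 2 := by
    rw [Nat.choose_succ_succ', Nat.choose_one_right]
  refine le_of_mul_le_mul_left ?_ (pow_pos ha0 n)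
  calc a ^ n * (3 ^ (n + 1 + 1).choose 2 * a ^ (n + 1 + 1))
      = 3 ^ (n + 1).choose 2 * (3 * a ^ 2) ^ (n + 1) := by rw [hc]; ring
    _ ≤ 3 ^ (n + 1).choose 2 * (4 * g) ^ (n + 1) := by gcongr
    _ = 4 ^ (n + 1) * (3 ^ (n + 1).choose 2 * g ^ (n + 1)) := by ring
    _ ≤ 4 ^ (n + 1) * (4 ^ (n + 1).choose 2 * (a ^ n * A'.det)) := by rw [← hminor]; gcongr
    _ = a ^ n * (4 ^ (n + 1 + 1).choose 2 * A'.det) := by rw [hc]; ring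

theorem exists_eq_transpose_mul_self_of_scaledSchur {R : Type*} [CommRing R]
    {A : Matrix (Fin (n + 1)) (Fin (n + 1)) R} (hA : A.IsSymm) (hone : A 0 0 = 1)
    {V : Matrix (Fin n) (Fin n) R} (hV : scaledSchur A = Vᵀ * V) :
    ∃ U : Matrix (Fin (n + 1)) (Fin (n + 1)) R, A = Uᵀ * U := by
  refine ⟨of (vecCons (A 0) fun i ↦ vecCons 0 (V i)), ?_⟩
  have hentry (i j) : A i.succ j.succ = A 0 i.succ * A 0 j.succ + ∑ k, V k i * V k j := by
    have := congrFun₂ hV i j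
    simp only [scaledSchur, hone, one_smul, Matrix.sub_apply, submatrix_apply, vecMulVec_apply,
      hA.apply 0 i.succ, mul_apply, transpose_apply] at this
    rw [← this, add_sub_cancel]
  ext i j
  refine Fin.cases ?_ (fun i ↦ ?_) i <;> refine Fin.cases ?_ (fun j ↦ ?_) j <;>
    simp [mul_apply, Fin.sum_univ_succ, hone, hentry, hA.apply 0 _]

-- Hermite's constant `(4 / 3) ^ (n / 2)` is less than `2` exactly when `n ≤ 4`.
theorem eq_one_of_hermite_bound (hn : n ≤ 4) {a : ℤ} (ha : 0 < a)
    (h : 3 ^ (n + 1).choose 2 * a ^ (n + 1) ≤ 4 ^ (n + 1).choose 2) : a = 1 := by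
  refine le_antisymm (not_lt.1 fun hlt ↦ ?_) (Int.add_one_le_of_lt ha)
  have htwo : 2 ≤ a := Int.add_one_le_of_lt hlt
  have : (3 : ℤ) ^ (n + 1).choose 2 * 2 ^ (n + 1) ≤ 4 ^ (n + 1).choose 2 :=
    le_trans (by gcongr) h
  interval_cases n <;> norm_num [Nat.choose] at this

theorem exists_eq_transpose_mul_self_of_det_eq_one (hn : n ≤ 5) {A : Matrix (Fin n) (Fin n) ℤ}
    (hA : A.PosDef) (hdet : A.det = 1) : ∃ U : Matrix (Fin n) (Fin n) ℤ, A = Uᵀ * U := by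
  induction n with
  | zero => exact ⟨0, Subsingleton.elim _ _⟩
  | succ n ih =>
  obtain ⟨S, hS⟩ := exists_specialLinearGroup_hermite_bound hA
  set B := S.1ᵀ * A * S.1 with hBA
  have hB : B.PosDef := posDef_transpose_mul_mul_self hA S
  have hBdet : B.det = 1 := by simp [hBA, hdet]
  have hsymm : B.IsSymm := by simpa using hB.isHermitian
  have hone : B 0 0 = 1 :=
    eq_one_of_hermite_bound (n := n) (by lia) hB.diag_pos (by simpa [hdet] using hS)
  have hminor : (scaledSchur B).det = 1 := by
    simpa [hone, hBdet] using apply_zero_mul_det_scaledSchur B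
  obtain ⟨V, hV⟩ := ih (by lia) (posDef_scaledSchur hB) hminor
  obtain ⟨U, hU⟩ := exists_eq_transpose_mul_self_of_scaledSchur hsymm hone hV
  refine ⟨U * S⁻¹.1, ?_⟩
  have hSS : S.1 * S⁻¹.1 = 1 := congrArg Subtype.val (mul_inv_cancel S)
  calc A = (S.1 * S⁻¹.1)ᵀ * A * (S.1 * S⁻¹.1) := by rw [hSS]; simp
    _ = S⁻¹.1ᵀ * B * S⁻¹.1 := by simp only [hBA, transpose_mul, Matrix.mul_assoc]
    _ = (U * S⁻¹.1)ᵀ * (U * S⁻¹.1) := by rw [hU]; simp only [transpose_mul, Matrix.mul_assoc]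

end Hermite

theorem det_fin_three_of {R : Type*} [CommRing R] (a b c d e f g h i : R) :
    (!![a, b, c; d, e, f; g, h, i]).det =
      a * e * i - a * f * h - b * d * i + b * f * g + c * d * h - c * e * g :=
  det_fin_three _

theorem posDef_fin_three_of_minors_pos {R : Type*} [CommRing R] [LinearOrder R]
    [IsStrictOrderedRing R] [StarRing R] [TrivialStar R] {a b c d e f : R} (ha : 0 < a)
    (hminor : 0 < a * b - f ^ 2) (hdet : 0 < (!![a, f, e; f, b, d; e, d, c]).det) :
    (!![a, f, e; f, b, d; e, d, c]).PosDef := by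
  refine .of_dotProduct_mulVec_pos ?_ fun v hv ↦ ?_
  · ext i j
    fin_cases i <;> fin_cases j <;> simp
  have hexpand : star v ⬝ᵥ !![a, f, e; f, b, d; e, d, c] *ᵥ v =
      v 0 * (a * v 0 + f * v 1 + e * v 2) + v 1 * (f * v 0 + b * v 1 + d * v 2) +
        v 2 * (e * v 0 + d * v 1 + c * v 2) := by
    simp [dotProduct, mulVec, Fin.sum_univ_three]
  have hsquares : a * (a * b - f ^ 2) * (star v ⬝ᵥ !![a, f, e; f, b, d; e, d, c] *ᵥ v) =
      (a * b - f ^ 2) * (a * v 0 + f * v 1 + e * v 2) ^ 2 +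
        ((a * b - f ^ 2) * v 1 + (a * d - f * e) * v 2) ^ 2 +
          a * (!![a, f, e; f, b, d; e, d, c]).det * v 2 ^ 2 := by
    rw [hexpand, det_fin_three_of]
    ring
  refine pos_of_mul_pos_right (hsquares ▸ ?_) (mul_pos ha hminor).le
  generalize a * b - f ^ 2 = minor at hminor ⊢
  by_cases hv₂ : v 2 = 0
  · by_cases hv₁ : v 1 = 0
    · have hv₀ : v 0 ≠ 0 := fun hv₀ ↦ hv (by ext i; fin_cases i <;> assumption)
      simp only [hv₁, hv₂, mul_zero, add_zero]
      positivity
    · simp only [hv₂, mul_zero, add_zero]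
      positivity
  · positivity

theorem exists_eq_sum_three_squares_of_det_eq_one {a b c d e f : ℤ} (ha : 0 < a)
    (hminor : 0 < a * b - f ^ 2) (hdet : (!![a, f, e; f, b, d; e, d, c]).det = 1) :
    ∃ x y z : ℤ, c = x ^ 2 + y ^ 2 + z ^ 2 := by
  obtain ⟨U, hU⟩ := exists_eq_transpose_mul_self_of_det_eq_one (by norm_num)
    (posDef_fin_three_of_minors_pos ha hminor (hdet ▸ one_pos)) hdet
  refine ⟨U 0 2, U 1 2, U 2 2, ?_⟩
  simpa [mul_apply, Fin.sum_univ_three, sq] using congrFun₂ hU 2 2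

theorem exists_prime_mul_eq_add_one {m : ℕ} (hm : m % 4 = 2) :
    ∃ p b : ℕ, p.Prime ∧ p % 4 = 1 ∧ b % 4 = 1 ∧ b * m = p + 1 := by
  have hcoprime : (m - 1).Coprime (4 * m) := by
    have hpred : (m - 1).Coprime m := by
      simpa [Nat.sub_add_cancel (show 1 ≤ m by lia)] using
        Nat.coprime_self_add_right (m := m - 1) (n := 1)
    have htwo : (m - 1).Coprime 2 := Nat.coprime_two_right.2 (Nat.odd_iff.2 (by lia))
    exact (htwo.mul_right htwo).mul_right hpred
  obtain ⟨p, hlt, hp, hmod⟩ := Nat.forall_exists_prime_gt_and_modEq m (by lia) hcoprime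
  obtain ⟨j, hj⟩ := (Nat.modEq_iff_dvd' (by lia)).1 hmod.symm
  refine ⟨p, 4 * j + 1, hp, ?_, by lia, ?_⟩ <;> grind

theorem exists_prime_dvd_sq_add {p b : ℕ} (hp : p.Prime) (hp4 : p % 4 = 1) (hb4 : b % 4 = 1)
    (hdvd : b ∣ p + 1) : ∃ f : ℤ, (p : ℤ) ∣ f ^ 2 + b := by
  have := Fact.mk hp
  have hbodd : Odd b := Nat.odd_iff.2 (by lia)
  have hmod : (p : ℤ) % b = -1 % b := by
    refine Int.ModEq.symm (Int.modEq_iff_dvd.2 ?_)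
    rw [sub_neg_eq_add]
    exact_mod_cast hdvd
  have hJ : jacobiSym (-(b : ℤ)) p = 1 := by
    rw [jacobiSym.neg _ (Nat.odd_iff.2 (by lia)), ZMod.χ₄_nat_one_mod_four hp4, one_mul,
      ← jacobiSym.quadratic_reciprocity_one_mod_four hp4 hbodd,
      jacobiSym.mod_left' hmod, jacobiSym.at_neg_one hbodd, ZMod.χ₄_nat_one_mod_four hb4]
  obtain ⟨r, hr⟩ := ZMod.isSquare_of_jacobiSym_eq_one hJ
  obtain ⟨f, rfl⟩ := ZMod.intCast_surjective r
  refine ⟨f, (ZMod.intCast_zmod_eq_zero_iff_dvd _ _).1 ?_⟩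
  push_cast at hr ⊢
  linear_combination -hr

theorem exists_eq_sum_three_squares_of_mod_four_eq_two {m : ℕ} (hm : m % 4 = 2) :
    ∃ x y z : ℤ, (m : ℤ) = x ^ 2 + y ^ 2 + z ^ 2 := by
  obtain ⟨p, b, hp, hp4, hb4, hbm⟩ := exists_prime_mul_eq_add_one hm
  obtain ⟨f, a, ha⟩ := exists_prime_dvd_sq_add hp hp4 hb4 ⟨m, hbm.symm⟩
  have hb : (b : ℤ) = a * p - f ^ 2 := by linear_combination ha
  have hb0 : (0 : ℤ) < b := by lia
  have ha0 : 0 < a := pos_of_mul_pos_right (ha ▸ by positivity) (Int.natCast_nonneg p)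
  have hdet : (!![a, f, 1; f, (p : ℤ), 0; 1, 0, (m : ℤ)]).det = 1 := by
    zify at hbm
    rw [det_fin_three_of]
    linear_combination hbm - m * hb
  exact exists_eq_sum_three_squares_of_det_eq_one ha0 (hb ▸ hb0) hdet

theorem exists_eq_sq_add_two_mul_sq_add_four_mul_sq {N : ℕ} (hN : Odd N) :
    ∃ p q f : ℤ, (N : ℤ) = p ^ 2 + 2 * q ^ 2 + 4 * f ^ 2 := by
  obtain ⟨x, y, z, h, hz⟩ : ∃ x y z : ℤ, 2 * (N : ℤ) = x ^ 2 + y ^ 2 + z ^ 2 ∧ Even z := by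
    obtain ⟨x, y, z, h⟩ := exists_eq_sum_three_squares_of_mod_four_eq_two (m := 2 * N) (by grind)
    have heven : Even (x ^ 2 + y ^ 2 + z ^ 2) := ⟨N, by push_cast at h; linarith⟩
    push_cast at h
    by_cases hz : Even z
    · exact ⟨x, y, z, h, hz⟩
    by_cases hy : Even y
    · exact ⟨x, z, y, by linarith, hy⟩
    · have hx : Even x := by simp_all [Int.even_add, Int.even_pow]
      exact ⟨y, z, x, by linarith, hx⟩
  obtain ⟨q, rfl⟩ := even_iff_two_dvd.1 hz
  have hxy : Even (x + y) := by
    have heven : Even (x ^ 2 + y ^ 2) := ⟨N - 2 * q ^ 2, by linarith⟩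
    simpa [Int.even_add, Int.even_pow] using heven
  obtain ⟨g, hg⟩ := hxy
  obtain rfl : y = 2 * g - x := by linarith
  obtain ⟨u, v, huv, hv⟩ : ∃ u v : ℤ, (N : ℤ) = u ^ 2 + v ^ 2 + 2 * q ^ 2 ∧ Even v := by
    have hsum : (N : ℤ) = g ^ 2 + (g - x) ^ 2 + 2 * q ^ 2 := by linarith
    by_cases hgeven : Even g
    · exact ⟨g - x, g, by linarith, hgeven⟩
    · refine ⟨g, g - x, hsum, ?_⟩
      have hNodd : Odd (g ^ 2 + (g - x) ^ 2 + 2 * q ^ 2) := hsum ▸ (Int.odd_coe_nat N).2 hN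
      by_contra hne
      simp_all [Int.even_add, Int.even_pow, ← Int.not_even_iff_odd]
  obtain ⟨f, rfl⟩ := even_iff_two_dvd.1 hv
  exact ⟨u, q, f, by linarith⟩

theorem exists_eq_sq_add_two_mul_sq_not_three_dvd {q f : ℤ} (hpos : 0 < q ^ 2 + 2 * f ^ 2) :
    ∃ q' f' : ℤ, q' ^ 2 + 2 * f' ^ 2 = q ^ 2 + 2 * f ^ 2 ∧ ¬(3 ∣ q' ∧ 3 ∣ f') := by
  induction hk : (q ^ 2 + 2 * f ^ 2).toNat using Nat.strong_induction_on generalizing q f with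
  | _ k ih =>
  by_cases hdvd : 3 ∣ q ∧ 3 ∣ f
  · obtain ⟨⟨q, rfl⟩, ⟨f, rfl⟩⟩ := hdvd
    have hnine : (3 * q) ^ 2 + 2 * (3 * f) ^ 2 = 9 * (q ^ 2 + 2 * f ^ 2) := by ring
    rw [hnine] at hpos hk
    obtain ⟨q', f', heq, hndvd⟩ := ih _ (by lia) (q := q) (f := f) (by lia) rfl
    -- The factor `9 = 1 ^ 2 + 2 * 2 ^ 2` is absorbed by composition of forms, in two ways.
    by_cases hthree : 3 ∣ 2 * q' + f'
    · exact ⟨q' + 4 * f', 2 * q' - f', by linear_combination 9 * heq, by lia⟩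
    · exact ⟨q' - 4 * f', 2 * q' + f', by linear_combination 9 * heq, by lia⟩
  · exact ⟨q, f, rfl, hdvd⟩

theorem three_dvd_sub_or_three_dvd_add {p q f : ℤ} (hmod : (p ^ 2 + 2 * q ^ 2 + 4 * f ^ 2) % 3 = 1)
    (hndvd : ¬(3 ∣ q ∧ 3 ∣ f)) : 3 ∣ p - q ∨ 3 ∣ p + q := by
  have hresidue : ∀ p q f : ZMod 3, p ^ 2 + 2 * q ^ 2 + 4 * f ^ 2 = 1 → ¬(q = 0 ∧ f = 0) →
      p - q = 0 ∨ p + q = 0 := by decide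
  have hform : ((p ^ 2 + 2 * q ^ 2 + 4 * f ^ 2 : ℤ) : ZMod 3) = (1 : ℤ) :=
    (ZMod.intCast_eq_intCast_iff' _ _ 3).2 hmod
  have hdvd (x : ℤ) : 3 ∣ x ↔ (x : ZMod 3) = 0 := (ZMod.intCast_zmod_eq_zero_iff_dvd x 3).symm
  rw [hdvd, hdvd] at hndvd ⊢
  push_cast at hform ⊢
  exact hresidue _ _ _ hform hndvd

theorem exists_eq_four_mul_sq_add_six_mul_sq_add_three_mul_sq {N : ℕ} (hodd : Odd N)
    (hmod : N % 3 = 1) (hsq : ¬IsSquare N) :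
    ∃ f K L : ℤ, (N : ℤ) = 4 * f ^ 2 + 6 * K ^ 2 + 3 * L ^ 2 := by
  obtain ⟨p, q₀, f₀, h₀⟩ := exists_eq_sq_add_two_mul_sq_add_four_mul_sq hodd
  have hpos : 0 < q₀ ^ 2 + 2 * f₀ ^ 2 := by
    refine (by positivity : 0 ≤ q₀ ^ 2 + 2 * f₀ ^ 2).lt_of_ne fun hzero ↦ hsq ?_
    exact Int.isSquare_natCast_iff.1 ⟨p, by linear_combination h₀ - 2 * hzero⟩
  obtain ⟨q, f, hqf, hndvd⟩ := exists_eq_sq_add_two_mul_sq_not_three_dvd hpos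
  have h : (N : ℤ) = p ^ 2 + 2 * q ^ 2 + 4 * f ^ 2 := by linear_combination h₀ - 2 * hqf
  obtain ⟨K, hK⟩ | ⟨K, hK⟩ := three_dvd_sub_or_three_dvd_add (p := p) (by lia) hndvd
  · obtain rfl : p = q + 3 * K := by linarith
    exact ⟨f, K, q + K, by linear_combination h⟩
  · obtain rfl : p = 3 * K - q := by linarith
    exact ⟨f, K, q - K, by linear_combination h⟩

theorem odd_and_odd_of_eq_twelve_mul_add_nine {f K L B n : ℤ}
    (h : 4 * f ^ 2 + 6 * K ^ 2 + 3 * L ^ 2 + 8 * B ^ 2 = 12 * n + 9) : Odd K ∧ Odd L := by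
  have hL : Odd L := by
    have : Odd (L ^ 2) := by grind
    simpa [Int.odd_pow] using this
  refine ⟨?_, hL⟩
  obtain ⟨l, rfl⟩ := hL
  have : Odd (K ^ 2) := by grind
  simpa [Int.odd_pow] using this

theorem three_dvd_add_or_three_dvd_sub_of_eq_twelve_mul_add_nine {f K L B n : ℤ}
    (h : 4 * f ^ 2 + 6 * K ^ 2 + 3 * L ^ 2 + 8 * B ^ 2 = 12 * n + 9) :
    3 ∣ B + f ∨ 3 ∣ B - f := by
  refine Int.prime_three.dvd_or_dvd ⟨3 * B ^ 2 + f ^ 2 + 2 * K ^ 2 + L ^ 2 - 4 * n - 3, ?_⟩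
  linear_combination -h

theorem three_mul_le_of_le {B f K L : ℤ} (hB : 1 ≤ B)
    (hle : 5 * (4 * f ^ 2 + 6 * K ^ 2 + 3 * L ^ 2) ≤ 2 * (2 * B + 3) ^ 2) :
    3 * K ≤ 2 * B + 3 + 2 * f ∧ 3 * L ≤ 4 * B + 3 - 2 * f := by
  have hK : (3 * K - 2 * f) ^ 2 ≤ (2 * B + 3) ^ 2 := by
    have hcauchy : 2 * (3 * K - 2 * f) ^ 2 = 5 * (6 * K ^ 2 + 4 * f ^ 2) - 12 * (K + f) ^ 2 := by
      ring
    linarith [hcauchy, sq_nonneg (K + f), sq_nonneg L]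
  have hL : (3 * L + 2 * f) ^ 2 ≤ (4 * B + 3) ^ 2 := by
    have hcauchy : (3 * L + 2 * f) ^ 2 = 4 * (3 * L ^ 2 + 4 * f ^ 2) - 3 * (L - 2 * f) ^ 2 := by
      ring
    nlinarith [hcauchy, sq_nonneg (L - 2 * f), sq_nonneg K]
  constructor
  · linarith [le_of_abs_le (abs_le_of_sq_le_sq hK (by linarith))]
  · linarith [le_of_abs_le (abs_le_of_sq_le_sq hL (by linarith))]

theorem exists_sq_add_pronic_of_eq_twelve_mul_add_nine {n B : ℕ} {f K L : ℤ}
    (h : 4 * f ^ 2 + 6 * K ^ 2 + 3 * L ^ 2 + 8 * (B : ℤ) ^ 2 = 12 * n + 9)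
    (hle : 5 * (4 * f ^ 2 + 6 * K ^ 2 + 3 * L ^ 2) ≤ 2 * (2 * (B : ℤ) + 3) ^ 2) :
    ∃ s k t l : ℕ, k ≤ s ∧ l ≤ t ∧ n = 2 * (s ^ 2 + k ^ 2 + k) + (t ^ 2 + l ^ 2 + l) := by
  wlog hf : 3 ∣ B + f generalizing f
  · refine this (f := -f) (by simpa using h) (by simpa using hle) ?_
    exact (three_dvd_add_or_three_dvd_sub_of_eq_twelve_mul_add_nine h).resolve_left hf
  wlog hK : 0 ≤ K generalizing K
  · exact this (K := -K) (by simpa using h) (by simpa using hle) (by lia)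
  wlog hL : 0 ≤ L generalizing L
  · exact this (L := -L) (by simpa using h) (by simpa using hle) (by lia)
  have hB : 1 ≤ (B : ℤ) := by
    rcases B.eq_zero_or_pos with rfl | hpos
    · push_cast at h hle
      lia
    · exact_mod_cast hpos
  obtain ⟨hKle, hLle⟩ := three_mul_le_of_le hB hle
  obtain ⟨⟨k, rfl⟩, ⟨l, rfl⟩⟩ := odd_and_odd_of_eq_twelve_mul_add_nine h
  obtain ⟨s, hs⟩ := hf
  obtain rfl : f = 3 * s - B := by linarith
  obtain ⟨t, ht⟩ : ∃ t, t = (B : ℤ) - s := ⟨_, rfl⟩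
  lift k to ℕ using by lia
  lift l to ℕ using by lia
  lift s to ℕ using by lia
  lift t to ℕ using by lia
  refine ⟨s, k, t, l, by lia, by lia, ?_⟩
  zify
  rw [ht]
  linarith

theorem exists_eq_hexagonal_add_hexagonal {s k : ℕ} (hks : k ≤ s) :
    ∃ a c : ℕ, s ^ 2 + k ^ 2 + k = a * (2 * a - 1) + c * (2 * c + 1) := by
  obtain ⟨j, rfl⟩ := Nat.exists_eq_add_of_le hks
  obtain ⟨i, rfl | rfl⟩ := j.even_or_odd'
  · refine ⟨i, k + i, ?_⟩
    cases i with
    | zero => ring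
    | succ i =>
      rw [show 2 * (i + 1) - 1 = 2 * i + 1 by lia]
      ring
  · refine ⟨k + i + 1, i, ?_⟩
    rw [show 2 * (k + i + 1) - 1 = 2 * (k + i) + 1 by lia]
    ring

theorem not_isSquare_of_mod_five {N : ℕ} (hN : N % 5 = 2 ∨ N % 5 = 3) : ¬IsSquare N := by
  rintro ⟨m, rfl⟩
  have hlt : m % 5 < 5 := Nat.mod_lt _ (by norm_num)
  rw [Nat.mul_mod] at hN
  interval_cases m % 5 <;> lia

theorem exists_lt_ten_mod_three_mod_five {R n : ℕ} (hR : 9 ≤ R) :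
    ∃ i < 10, (R - i) % 3 ≠ 0 ∧
      ((2 * n + 4 + 2 * (R - i) ^ 2) % 5 = 2 ∨ (2 * n + 4 + 2 * (R - i) ^ 2) % 5 = 3) := by
  have hresidue : ∀ c < 5, ∀ r < 15, ∃ i < 10, (r + 15 - i) % 3 ≠ 0 ∧
      ((2 * c + 4 + 2 * (r + 15 - i) ^ 2) % 5 = 2 ∨
        (2 * c + 4 + 2 * (r + 15 - i) ^ 2) % 5 = 3) := by decide
  obtain ⟨i, hi, hthree, hfive⟩ := hresidue (n % 5) (Nat.mod_lt _ (by norm_num)) (R % 15)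
    (Nat.mod_lt _ (by norm_num))
  have hsq : (R - i) ^ 2 % 5 = (R % 15 + 15 - i) ^ 2 % 5 := Nat.ModEq.pow 2 (by grind [Nat.ModEq])
  exact ⟨i, hi, by lia, by lia⟩

theorem exists_not_isSquare_add_eight_mul_sq {n : ℕ} (hn : 10000 ≤ n) :
    ∃ B N : ℕ, B % 3 ≠ 0 ∧ N + 8 * B ^ 2 = 12 * n + 9 ∧ ¬IsSquare N ∧
      5 * N ≤ 2 * (2 * B + 3) ^ 2 := by
  set R := Nat.sqrt (12 * n / 8)
  have hRle : 8 * R ^ 2 ≤ 12 * n := by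
    have := Nat.sqrt_le' (12 * n / 8)
    lia
  have hltR : 12 * n < 8 * (R + 1) ^ 2 := by
    have : 12 * n / 8 < (R + 1) ^ 2 := Nat.lt_succ_sqrt' _
    lia
  have hR : 121 ≤ R := Nat.le_sqrt'.2 (by lia)
  obtain ⟨i, hi, hthree, hfive⟩ := exists_lt_ten_mod_three_mod_five (n := n) (by lia : 9 ≤ R)
  obtain ⟨B, hB⟩ : ∃ B, R = B + i := ⟨R - i, by lia⟩
  rw [hB, Nat.add_sub_cancel] at hthree hfive
  have hBle : 8 * B ^ 2 ≤ 12 * n := le_trans (by gcongr; lia) hRle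
  have hltB : 12 * n < 8 * (B + 10) ^ 2 := hltR.trans_le <|
    Nat.mul_le_mul_left 8 <| Nat.pow_le_pow_left (by lia) 2
  refine ⟨B, 12 * n + 9 - 8 * B ^ 2, hthree, by lia, not_isSquare_of_mod_five (by lia), ?_⟩
  have : 112 ≤ B := by lia
  have : 5 * (12 * n + 9) ≤ 2 * (2 * B + 3) ^ 2 + 40 * B ^ 2 := by nlinarith
  lia

/-- Sumsets of sets of naturals encoded as bit masks: if `M` encodes `X`, then `sumsetMask t M k`
encodes `X + {t j | j < k}`. The encoding keeps the verification for small numbers computable. -/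
def sumsetMask (t : ℕ → ℕ) (M : ℕ) : ℕ → ℕ
  | 0 => 0
  | k + 1 => sumsetMask t M k ||| M <<< t k

theorem exists_of_testBit_sumsetMask {t : ℕ → ℕ} {M k i : ℕ}
    (h : (sumsetMask t M k).testBit i = true) : ∃ j x, i = x + t j ∧ M.testBit x = true := by
  induction k with
  | zero => simp [sumsetMask] at h
  | succ k ih =>
    rw [sumsetMask, Nat.testBit_or, Bool.or_eq_true, Nat.testBit_shiftLeft, Bool.and_eq_true,
      decide_eq_true_eq] at h
    obtain h | ⟨hle, h⟩ := h
    · exact ih h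
    · exact ⟨k, i - t k, by lia, h⟩

theorem testBit_of_mod_two_pow_eq {M k i : ℕ} (h : M % 2 ^ k = 2 ^ k - 1) (hi : i < k) :
    M.testBit i = true := by
  simpa [hi] using congrArg (Nat.testBit · i) h

set_option exponentiation.threshold 20000 in
theorem exists_eq_of_lt_ten_thousand {n : ℕ} (hn : n < 10000) :
    ∃ a b c d : ℕ,
      n = 2 * (a * (2 * a - 1)) + b * (2 * b - 1) + 2 * (c * (2 * c + 1)) + d * (2 * d + 1) := by
  have hmask : sumsetMask (fun a ↦ 2 * (a * (2 * a - 1))) (sumsetMask (fun b ↦ b * (2 * b - 1))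
      (sumsetMask (fun c ↦ 2 * (c * (2 * c + 1))) (sumsetMask (fun d ↦ d * (2 * d + 1)) 1 75) 55)
      75) 55 % 2 ^ 10000 = 2 ^ 10000 - 1 := by decide +kernel
  obtain ⟨a, w, rfl, hw⟩ := exists_of_testBit_sumsetMask (testBit_of_mod_two_pow_eq hmask hn)
  obtain ⟨b, x, rfl, hx⟩ := exists_of_testBit_sumsetMask hw
  obtain ⟨c, y, rfl, hy⟩ := exists_of_testBit_sumsetMask hx
  obtain ⟨d, z, rfl, hz⟩ := exists_of_testBit_sumsetMask hy
  obtain rfl : z = 0 := Nat.testBit_one_eq_true_iff_self_eq_zero.1 hz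
  exact ⟨a, b, c, d, by ring⟩

theorem stmt_1 (n : ℕ) :
    ∃ a b c d : ℕ,
      n = 2 * (a * (2 * a - 1)) + b * (2 * b - 1) + 2 * (c * (2 * c + 1)) + d * (2 * d + 1) := by
  obtain hn | hn := lt_or_ge n 10000
  · exact exists_eq_of_lt_ten_thousand hn
  obtain ⟨B, N, hB, hN, hsq, hle⟩ := exists_not_isSquare_add_eight_mul_sq hn
  have hNmod : N % 3 = 1 := by
    have : B ^ 2 % 3 = 1 := by
      obtain h | h : B % 3 = 1 ∨ B % 3 = 2 := by lia
      all_goals simp [Nat.pow_mod, h]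
    lia
  obtain ⟨f, K, L, hform⟩ :=
    exists_eq_four_mul_sq_add_six_mul_sq_add_three_mul_sq (by grind) hNmod hsq
  zify at hN hle
  rw [hform] at hN hle
  obtain ⟨s, k, t, l, hks, hlt, rfl⟩ := exists_sq_add_pronic_of_eq_twelve_mul_add_nine hN hle
  obtain ⟨a, c, hac⟩ := exists_eq_hexagonal_add_hexagonal hks
  obtain ⟨b, d, hbd⟩ := exists_eq_hexagonal_add_hexagonal hlt
  exact ⟨a, b, c, d, by rw [hac, hbd]; ring⟩
end

section
/- Every non-negative integer m can be written as m = 4·T_x + T_y + T_z for some non-negative integers x, y, z. -/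
/-- The `k`-th triangular number. -/
def T (k : ℕ) : ℕ := k * (k + 1) / 2

/-!
Since `8 T_k + 1 = (2k + 1)²`, the equation `m = 4 T_x + T_y + T_z` says that `8m + 6` is
`(2(2x + 1))² + (2y + 1)² + (2z + 1)²`, and modulo `8` every representation of `8m + 6` as a sum of
three squares has this shape. For `n ≡ 2 (mod 4)`, Dirichlet's theorem provides a prime
`p = dn - 1` with `p ≡ d ≡ 1 (mod 4)`, and quadratic reciprocity makes `-d` a square modulo `p`.
This yields a positive definite integral ternary form of determinant one taking the value `n`;
Hermite reduction shows that any such form is equivalent to the sum of three squares.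
-/

open Matrix
open scoped MatrixGroups NumberTheorySymbols

section BasisChange

variable {n R : Type*} [Fintype n] [DecidableEq n] [CommRing R]

/-- The Gram matrix of the bilinear form `A` in the basis formed by the columns of `P`. -/
def basisChange (A : Matrix n n R) (P : SpecialLinearGroup n R) : Matrix n n R :=
  (P : Matrix n n R)ᵀ * A * P

lemma basisChange_mul (A : Matrix n n R) (P Q : SpecialLinearGroup n R) :
    basisChange A (P * Q) = basisChange (basisChange A P) Q := by
  simp only [basisChange, Matrix.SpecialLinearGroup.coe_mul, transpose_mul, Matrix.mul_assoc]

lemma det_basisChange (A : Matrix n n R) (P : SpecialLinearGroup n R) :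
    (basisChange A P).det = A.det := by
  simp [basisChange]

lemma posDef_basisChange [PartialOrder R] [StarRing R] [TrivialStar R] {A : Matrix n n R}
    (hA : A.PosDef) (P : SpecialLinearGroup n R) : (basisChange A P).PosDef := by
  rw [basisChange, ← conjTranspose_eq_transpose_of_trivial]
  refine hA.conjTranspose_mul_mul_same (mulVec_injective_of_isUnit ?_)
  simp [isUnit_iff_isUnit_det]

end BasisChange

section PositiveDefinite

variable {R : Type*} [CommRing R]

/-- The second leading principal minor of a `3 × 3` matrix. On the Gram matrix of a ternary form it
is the determinant of the restriction to the first two coordinates. -/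
def upperMinor (A : Matrix (Fin 3) (Fin 3) R) : R := A 0 0 * A 1 1 - A 0 1 * A 1 0

lemma exists_eq_transpose_mul_self_of_leading_minors_eq_one {A : Matrix (Fin 3) (Fin 3) R}
    (hA : A.IsSymm) (h₁ : A 0 0 = 1) (h₂ : upperMinor A = 1) (h₃ : A.det = 1) :
    ∃ U : Matrix (Fin 3) (Fin 3) R, A = Uᵀ * U := by
  have h10 := hA.apply 0 1
  have h20 := hA.apply 0 2
  have h21 := hA.apply 1 2
  simp only [upperMinor, det_fin_three, h₁, h10, h20, h21] at h₂ h₃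
  have h11 : A 1 1 = A 0 1 * A 0 1 + 1 := by linear_combination h₂
  have h22 : A 2 2 = A 0 2 ^ 2 + (A 1 2 - A 0 1 * A 0 2) ^ 2 + 1 := by
    linear_combination h₃ - (A 2 2 - A 0 2 ^ 2) * h₂
  refine ⟨!![1, A 0 1, A 0 2; 0, 1, A 1 2 - A 0 1 * A 0 2; 0, 0, 1], ?_⟩
  ext i j
  fin_cases i <;> fin_cases j <;>
    simp [mul_apply, Fin.sum_univ_three, h₁, h10, h20, h21, h11, h22, sq, mul_comm (A 0 2)]

variable [LinearOrder R] [IsStrictOrderedRing R] [StarRing R] [TrivialStar R]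
  {A : Matrix (Fin 3) (Fin 3) R}

lemma upperMinor_pos_of_posDef (hA : A.PosDef) : 0 < upperMinor A := by
  have hpos : 0 < A 0 0 := hA.diag_pos
  have hne : ![-A 0 1, A 0 0, 0] ≠ 0 := fun h ↦ hpos.ne' (by simpa using congrFun h 1)
  have hval : star ![-A 0 1, A 0 0, 0] ⬝ᵥ (A *ᵥ ![-A 0 1, A 0 0, 0]) = A 0 0 * upperMinor A := by
    simp only [upperMinor, dotProduct, star_trivial, mulVec, Fin.sum_univ_three, cons_val]
    ring
  exact pos_of_mul_pos_right (hval ▸ hA.dotProduct_mulVec_pos hne) hpos.le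

/-- Sylvester's criterion. -/
lemma posDef_of_minors_pos (hA : A.IsSymm) (h₁ : 0 < A 0 0) (h₂ : 0 < upperMinor A)
    (h₃ : 0 < A.det) : A.PosDef := by
  refine .of_dotProduct_mulVec_pos (isHermitian_iff_isSymm.2 hA) fun x hx ↦ ?_
  have h10 := hA.apply 0 1
  have h20 := hA.apply 0 2
  have h21 := hA.apply 1 2
  have completed_squares : A 0 0 * upperMinor A * (star x ⬝ᵥ (A *ᵥ x)) =
      upperMinor A * (A 0 0 * x 0 + A 0 1 * x 1 + A 0 2 * x 2) ^ 2 +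
      (upperMinor A * x 1 + (A 0 0 * A 1 2 - A 0 1 * A 0 2) * x 2) ^ 2 +
      A 0 0 * A.det * x 2 ^ 2 := by
    simp only [upperMinor, det_fin_three, dotProduct, star_trivial, mulVec, Fin.sum_univ_three,
      h10, h20, h21]
    ring
  refine pos_of_mul_pos_right (completed_squares ▸ lt_of_not_ge fun hle ↦ hx ?_) (mul_pos h₁ h₂).le
  have hx2 : x 2 = 0 := by
    by_contra h
    exact hle.not_gt (by positivity)
  have hx1 : x 1 = 0 := by
    by_contra h
    rw [hx2] at hle
    simp only [mul_zero, add_zero] at hle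
    exact hle.not_gt (by positivity)
  have hx0 : x 0 = 0 := by
    by_contra h
    rw [hx1, hx2] at hle
    simp only [mul_zero, add_zero] at hle
    exact hle.not_gt (by positivity)
  ext i
  fin_cases i <;> assumption

end PositiveDefinite

section HermiteReduction

/-- Lagrange's bound for the binary form `a x² + 2 f x y + b y²`, whose value at `(k, 1)` appears in
`hmin`. -/
lemma three_mul_sq_le_of_forall_le {a b f : ℤ} (ha : 0 < a)
    (hmin : ∀ k : ℤ, a ≤ b + 2 * k * f + k ^ 2 * a) : 3 * a ^ 2 ≤ 4 * (a * b - f ^ 2) := by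
  obtain ⟨k, hk⟩ : ∃ k : ℤ, |2 * (f + k * a)| ≤ a := by
    refine ⟨-((2 * f + a) / (2 * a)), abs_le.2 ?_⟩
    have hdiv := Int.emod_add_mul_ediv (2 * f + a) (2 * a)
    have hnonneg := Int.emod_nonneg (2 * f + a) (show 2 * a ≠ 0 by positivity)
    have hlt := Int.emod_lt_of_pos (2 * f + a) (show 0 < 2 * a by positivity)
    constructor <;> linarith
  have hsq : (2 * (f + k * a)) ^ 2 ≤ a ^ 2 := sq_le_sq.2 (hk.trans (le_abs_self a))
  linarith [mul_le_mul_of_nonneg_left (hmin k) ha.le]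

/-- The bounds that Hermite reduction achieves for the Gram matrix of a positive definite ternary
form; for determinant one they determine the first two leading minors. -/
structure IsHermiteReduced (A : Matrix (Fin 3) (Fin 3) ℤ) : Prop where
  apply_zero_le : 3 * A 0 0 ^ 2 ≤ 4 * upperMinor A
  upperMinor_le : 3 * upperMinor A ^ 2 ≤ 4 * (A 0 0 * A.det)

variable {A : Matrix (Fin 3) (Fin 3) ℤ}

lemma three_mul_apply_zero_sq_le (hA : A.PosDef)
    (hmin : ∀ P : SL(3, ℤ),
      A 0 0 + upperMinor A ≤ basisChange A P 0 0 + upperMinor (basisChange A P)) :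
    3 * A 0 0 ^ 2 ≤ 4 * upperMinor A := by
  have h10 : A 1 0 = A 0 1 := (isHermitian_iff_isSymm.1 hA.isHermitian).apply 0 1
  have hle (k : ℤ) : A 0 0 ≤ A 1 1 + 2 * k * A 0 1 + k ^ 2 * A 0 0 := by
    let P : SL(3, ℤ) := ⟨!![k, -1, 0; 1, 0, 0; 0, 0, 1], by simp [det_fin_three]⟩
    have hzero : basisChange A P 0 0 = A 1 1 + 2 * k * A 0 1 + k ^ 2 * A 0 0 := by
      simp only [P, basisChange, mul_apply, transpose_apply, of_apply, cons_val, cons_val',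
        cons_val_fin_one, Fin.sum_univ_three, h10]
      ring
    have hminor : upperMinor (basisChange A P) = upperMinor A := by
      simp only [P, basisChange, upperMinor, mul_apply, transpose_apply, of_apply, cons_val,
        cons_val', cons_val_fin_one, Fin.sum_univ_three, h10]
      ring
    linarith [hmin P]
  calc 3 * A 0 0 ^ 2 ≤ 4 * (A 0 0 * A 1 1 - A 0 1 ^ 2) :=
        three_mul_sq_le_of_forall_le hA.diag_pos hle
    _ = 4 * upperMinor A := by rw [upperMinor, h10, sq]

-- The argument of `three_mul_apply_zero_sq_le`, applied to the binary form whose coefficients are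
-- the `2 × 2` minors of `A` containing the entry `A 0 0` (up to sign, a block of the adjugate).
lemma three_mul_upperMinor_sq_le (hA : A.PosDef)
    (hmin : ∀ P : SL(3, ℤ),
      A 0 0 + upperMinor A ≤ basisChange A P 0 0 + upperMinor (basisChange A P)) :
    3 * upperMinor A ^ 2 ≤ 4 * (A 0 0 * A.det) := by
  have hsymm : A.IsSymm := isHermitian_iff_isSymm.1 hA.isHermitian
  have h10 : A 1 0 = A 0 1 := hsymm.apply 0 1
  have h20 : A 2 0 = A 0 2 := hsymm.apply 0 2
  have h21 : A 2 1 = A 1 2 := hsymm.apply 1 2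
  let b := A 0 0 * A 2 2 - A 0 2 ^ 2
  let f := A 0 0 * A 1 2 - A 0 1 * A 0 2
  have hle (k : ℤ) : upperMinor A ≤ b + 2 * k * f + k ^ 2 * upperMinor A := by
    let P : SL(3, ℤ) := ⟨!![1, 0, 0; 0, k, -1; 0, 1, 0], by simp [det_fin_three]⟩
    have hzero : basisChange A P 0 0 = A 0 0 := by
      simp [P, basisChange, mul_apply, Fin.sum_univ_three]
    have hminor : upperMinor (basisChange A P) = b + 2 * k * f + k ^ 2 * upperMinor A := by
      simp only [P, b, f, basisChange, upperMinor, mul_apply, transpose_apply, of_apply, cons_val,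
        cons_val', cons_val_fin_one, Fin.sum_univ_three, h10, h20, h21]
      ring
    linarith [hmin P]
  calc 3 * upperMinor A ^ 2 ≤ 4 * (upperMinor A * b - f ^ 2) :=
        three_mul_sq_le_of_forall_le (upperMinor_pos_of_posDef hA) hle
    _ = 4 * (A 0 0 * A.det) := by
      simp only [b, f, upperMinor, det_fin_three, h10, h20, h21]
      ring

theorem exists_isHermiteReduced_basisChange (hA : A.PosDef) :
    ∃ P : SL(3, ℤ), IsHermiteReduced (basisChange A P) := by
  let size (P : SL(3, ℤ)) : ℤ := basisChange A P 0 0 + upperMinor (basisChange A P)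
  have size_pos (P : SL(3, ℤ)) : 0 < size P :=
    add_pos (posDef_basisChange hA P).diag_pos (upperMinor_pos_of_posDef (posDef_basisChange hA P))
  let P := Function.argmin fun P ↦ (size P).toNat
  have hPpos := posDef_basisChange hA P
  suffices hmin : ∀ Q, size P ≤ basisChange (basisChange A P) Q 0 0 +
      upperMinor (basisChange (basisChange A P) Q) from
    ⟨P, three_mul_apply_zero_sq_le hPpos hmin, three_mul_upperMinor_sq_le hPpos hmin⟩
  intro Q
  have hle : (size P).toNat ≤ (size (P * Q)).toNat :=
    Function.argmin_le (fun P ↦ (size P).toNat) (P * Q)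
  rw [← basisChange_mul]
  exact not_lt.1 fun hlt ↦ hle.not_gt ((Int.toNat_lt_toNat (size_pos P)).2 hlt)

lemma apply_zero_eq_one_and_upperMinor_eq_one (hA : A.PosDef) (hred : IsHermiteReduced A)
    (hdet : A.det = 1) : A 0 0 = 1 ∧ upperMinor A = 1 := by
  have ha : 0 < A 0 0 := hA.diag_pos
  have hB := upperMinor_pos_of_posDef hA
  obtain ⟨h₁, h₂⟩ := hred
  rw [hdet, mul_one] at h₂
  -- The sum of the two bounds reads `3 (a² + B²) ≤ 4 (a + B)`, so neither integer can reach `2`.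
  constructor <;> nlinarith

theorem exists_eq_transpose_mul_self_of_posDef (hA : A.PosDef) (hdet : A.det = 1) :
    ∃ M : Matrix (Fin 3) (Fin 3) ℤ, A = Mᵀ * M := by
  obtain ⟨P, hred⟩ := exists_isHermiteReduced_basisChange hA
  have hP := posDef_basisChange hA P
  have hPdet : (basisChange A P).det = 1 := (det_basisChange A P).trans hdet
  obtain ⟨ha, hB⟩ := apply_zero_eq_one_and_upperMinor_eq_one hP hred hPdet
  obtain ⟨U, hU⟩ := exists_eq_transpose_mul_self_of_leading_minors_eq_one
    (isHermitian_iff_isSymm.1 hP.isHermitian) ha hB hPdet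
  refine ⟨U * (P⁻¹ : SL(3, ℤ)), ?_⟩
  calc A = basisChange (basisChange A P) P⁻¹ := by rw [← basisChange_mul]; simp [basisChange]
    _ = _ := by rw [hU, basisChange, transpose_mul]; simp only [Matrix.mul_assoc]

end HermiteReduction

section ThreeSquares

theorem sum_three_squares_of_dvd_sq_add {n d t : ℤ} (hd : 0 < d) (hnd : 1 < n * d)
    (hdvd : n * d - 1 ∣ t ^ 2 + d) : ∃ u v w : ℤ, u ^ 2 + v ^ 2 + w ^ 2 = n := by
  obtain ⟨a, ha⟩ := hdvd
  let A : Matrix (Fin 3) (Fin 3) ℤ := !![n * d - 1, t, 0; t, a, 1; 0, 1, n]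
  have hminor : upperMinor A = d := by
    simp only [A, upperMinor, of_apply, cons_val, cons_val', cons_val_fin_one]
    linear_combination -ha
  have hdet : A.det = 1 := by
    simp only [A, det_fin_three, of_apply, cons_val, cons_val', cons_val_fin_one]
    linear_combination -n * ha
  have hsymm : A.IsSymm := by
    ext i j
    fin_cases i <;> fin_cases j <;> rfl
  have hA : A.PosDef :=
    posDef_of_minors_pos hsymm (by simpa [A] using hnd) (hminor ▸ hd) (hdet ▸ one_pos)
  obtain ⟨M, hM⟩ := exists_eq_transpose_mul_self_of_posDef hA hdet
  refine ⟨M 0 2, M 1 2, M 2 2, ?_⟩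
  simpa [A, mul_apply, Fin.sum_univ_three, ← sq] using (congrFun₂ hM 2 2).symm

lemma isSquare_neg_of_dvd_add_one {p d : ℕ} [Fact p.Prime] (hp : p % 4 = 1) (hd : d % 4 = 1)
    (hdvd : d ∣ p + 1) : IsSquare (-d : ZMod p) := by
  have hmod : (p : ℤ) ≡ -1 [ZMOD d] := by
    refine (Int.modEq_iff_dvd.2 ?_).symm
    simpa using Int.natCast_dvd_natCast.2 hdvd
  have hJ : J(d | p) = 1 := by
    rw [jacobiSym.quadratic_reciprocity_one_mod_four hd (Nat.odd_iff.2 (by lia)),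
      jacobiSym.mod_left' hmod, jacobiSym.at_neg_one (Nat.odd_iff.2 (by lia)),
      ZMod.χ₄_nat_one_mod_four hd]
  have hsq_neg_one : IsSquare (-1 : ZMod p) := ZMod.exists_sq_eq_neg_one_iff.2 (by lia)
  rw [neg_eq_neg_one_mul]
  exact hsq_neg_one.mul (by simpa using ZMod.isSquare_of_jacobiSym_eq_one hJ)

lemma exists_prime_add_one_eq_mul {n : ℕ} (hn : n % 4 = 2) :
    ∃ p d : ℕ, p.Prime ∧ p % 4 = 1 ∧ d % 4 = 1 ∧ p + 1 = n * d := by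
  have hcop : (n - 1).Coprime (4 * n) := by
    refine .mul_right (.pow_right 2 (Nat.coprime_two_right.2 (Nat.odd_iff.2 (by lia)))) ?_
    exact (Nat.coprime_self_sub_left (by lia)).2 (Nat.coprime_one_left n)
  obtain ⟨p, hnp, hp, hmod⟩ :=
    Nat.forall_exists_prime_gt_and_modEq n (show 4 * n ≠ 0 by lia) hcop
  obtain ⟨q, hq⟩ := (Nat.modEq_iff_dvd' (by lia)).1 hmod.symm
  rw [mul_assoc] at hq
  refine ⟨p, 4 * q + 1, hp, by lia, by lia, ?_⟩
  lia

theorem sum_three_squares_of_mod_four_eq_two {n : ℕ} (hn : n % 4 = 2) :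
    ∃ u v w : ℕ, u ^ 2 + v ^ 2 + w ^ 2 = n := by
  obtain ⟨p, d, hp, hp4, hd4, hpd⟩ := exists_prime_add_one_eq_mul hn
  have := Fact.mk hp
  obtain ⟨r, hr⟩ := isSquare_neg_of_dvd_add_one hp4 hd4 (Dvd.intro_left n hpd.symm)
  obtain ⟨t, rfl⟩ := ZMod.intCast_surjective r
  have hpd' : (n * d - 1 : ℤ) = p := by
    rw [sub_eq_iff_eq_add]
    exact_mod_cast hpd.symm
  have hdvd : (n * d - 1 : ℤ) ∣ t ^ 2 + d := by
    rw [hpd', ← ZMod.intCast_zmod_eq_zero_iff_dvd]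
    push_cast
    linear_combination -hr
  obtain ⟨u, v, w, h⟩ := sum_three_squares_of_dvd_sq_add (by lia)
    (by linarith [show (0 : ℤ) < p from mod_cast hp.pos]) hdvd
  exact ⟨u.natAbs, v.natAbs, w.natAbs, by zify; simpa using h⟩

end ThreeSquares

section TriangularNumbers

lemma eight_mul_T_add_one (k : ℕ) : 8 * T k + 1 = (2 * k + 1) ^ 2 := by
  have hT : 2 * T k = k * (k + 1) := Nat.mul_div_cancel' (Nat.even_mul_succ_self k).two_dvd
  linear_combination 4 * hT

lemma exists_eq_four_mul_T_add_T_add_T {m u v w : ℕ} (hu : u % 4 = 2) (hv : v % 2 = 1)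
    (hw : w % 2 = 1) (h : u ^ 2 + v ^ 2 + w ^ 2 = 8 * m + 6) :
    ∃ x y z : ℕ, m = 4 * T x + T y + T z := by
  obtain ⟨x, rfl⟩ : ∃ x, u = 2 * (2 * x + 1) := ⟨u / 4, by lia⟩
  obtain ⟨y, rfl⟩ : ∃ y, v = 2 * y + 1 := ⟨v / 2, by lia⟩
  obtain ⟨z, rfl⟩ : ∃ z, w = 2 * z + 1 := ⟨w / 2, by lia⟩
  rw [mul_pow, ← eight_mul_T_add_one, ← eight_mul_T_add_one, ← eight_mul_T_add_one] at h
  exact ⟨x, y, z, by lia⟩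

lemma sq_mod_eight (u : ℕ) :
    u % 2 = 1 ∧ u ^ 2 % 8 = 1 ∨ u % 4 = 2 ∧ u ^ 2 % 8 = 4 ∨ u % 4 = 0 ∧ u ^ 2 % 8 = 0 := by
  have : u % 8 < 8 := Nat.mod_lt _ (by norm_num)
  rw [Nat.pow_mod]
  interval_cases h : u % 8 <;> lia

lemma mod_four_of_sum_three_squares_mod_eight_eq_six {u v w : ℕ}
    (h : (u ^ 2 + v ^ 2 + w ^ 2) % 8 = 6) :
    u % 4 = 2 ∧ v % 2 = 1 ∧ w % 2 = 1 ∨ v % 4 = 2 ∧ u % 2 = 1 ∧ w % 2 = 1 ∨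
      w % 4 = 2 ∧ u % 2 = 1 ∧ v % 2 = 1 := by
  have hu := sq_mod_eight u
  have hv := sq_mod_eight v
  have hw := sq_mod_eight w
  lia

end TriangularNumbers

theorem stmt_5 (m : ℕ) : ∃ x y z : ℕ, m = 4 * T x + T y + T z := by
  obtain ⟨u, v, w, h⟩ := sum_three_squares_of_mod_four_eq_two (n := 8 * m + 6) (by lia)
  obtain ⟨hu, hv, hw⟩ | ⟨hv, hu, hw⟩ | ⟨hw, hu, hv⟩ :=
    mod_four_of_sum_three_squares_mod_eight_eq_six (u := u) (v := v) (w := w) (by lia)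
  · exact exists_eq_four_mul_T_add_T_add_T hu hv hw h
  · exact exists_eq_four_mul_T_add_T_add_T hv hu hw (by linarith)
  · exact exists_eq_four_mul_T_add_T_add_T hw hu hv (by linarith)
end
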